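/- arXiv:1903.03361 — 6 statements merged into one kernel-verified Lean document; each statement's English description precedes it below -/
import Mathlib

section
/- Let k be a field of characteristic zero, let 𝔉 be the free Lie algebra over k on four generators v₁, v₂, w₁, w₂, let I be the Lie ideal of 𝔉 generated by the single element ⁅v₁,v₂⁆ + ⁅w₁,w₂⁆, and let L = 𝔉/I, with v̄₁, v̄₂, w̄₁, w̄₂ the images of the generators. Then there exists no element d ∈ L such that ⁅v̄₁, d⁆ ∈ Fil⁴L and ⁅w̄₁, d⁆ − ⁅w̄₁, ⁅v̄₁, v̄₂⁆⁆ ∈ Fil⁴L. -/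
/-!
The relation `⁅v₁, v₂⁆ + ⁅w₁, w₂⁆` is killed by any substitution `v₁ = w₂ = x`, `v₂ = w₁ = y`,
since `⁅x, y⁆ + ⁅y, x⁆ = 0`. Take for `x, y` the strictly upper triangular `4 × 4` matrices
`x = E₁₂ + E₂₃ + E₃₄` and `y = E₁₂ + E₃₄`. This gives a representation of `L` by strictly upper
triangular matrices (`surfaceRep`), in which `Fil⁴ L` acts by zero because products of four
such matrices vanish (`surfaceRep_lowerCentralSeries`).

If `d` were as in the statement, its image `D` would satisfy `⁅x, D⁆ = 0` and
`⁅y, D⁆ = ⁅y, ⁅x, y⁆⁆`. The first equation makes `D` a polynomial in the regular nilpotent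
matrix `x`, so the upper right corner of `⁅y, D⁆` is `D₂₄ - D₁₃ = 0`; the upper right corner of
`⁅y, ⁅x, y⁆⁆` is `2`. This is impossible in characteristic zero (`no_matrix`).
-/

open FreeLieAlgebra

/-- The element `⁅v₁, v₂⁆ + ⁅w₁, w₂⁆` of the free Lie algebra over `k` on the four
generators `v₁ = of k 0`, `v₂ = of k 1`, `w₁ = of k 2`, `w₂ = of k 3`. -/
noncomputable def surfaceRelator (k : Type*) [Field k] : FreeLieAlgebra k (Fin 4) :=
  ⁅of k (0 : Fin 4), of k (1 : Fin 4)⁆ + ⁅of k (2 : Fin 4), of k (3 : Fin 4)⁆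

/-- The Lie ideal `I` of the free Lie algebra on four generators, generated by the single
element `⁅v₁, v₂⁆ + ⁅w₁, w₂⁆`. -/
noncomputable def surfaceIdeal (k : Type*) [Field k] : LieIdeal k (FreeLieAlgebra k (Fin 4)) :=
  LieSubmodule.lieSpan k (FreeLieAlgebra k (Fin 4)) {surfaceRelator k}

/-- The quotient Lie algebra `L = 𝔉/I`. -/
abbrev SurfaceLieAlgebra (k : Type*) [Field k] : Type _ :=
  FreeLieAlgebra k (Fin 4) ⧸ surfaceIdeal k

/-- The images `v̄₁, v̄₂, w̄₁, w̄₂` of the four generators in the quotient `L = 𝔉/I`. -/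
noncomputable def surfaceGen (k : Type*) [Field k] (i : Fin 4) : SurfaceLieAlgebra k :=
  LieSubmodule.Quotient.mk (N := surfaceIdeal k) (of k i)

open Matrix

-- The commutator bracket on matrices.
attribute [local instance] LieRing.ofAssociativeRing

/-- The `4 × 4` matrices supported on the entries `(i, j)` with `j ≥ i + m`; for `m = 1` these
are the strictly upper triangular matrices, and for `m = 4` only the zero matrix. -/
def upperBand (k : Type*) [Field k] (m : ℕ) : Submodule k (Matrix (Fin 4) (Fin 4) k) where
  carrier := {A | ∀ i j : Fin 4, (j : ℕ) < i + m → A i j = 0}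
  add_mem' {A B} hA hB i j h := by rw [Matrix.add_apply, hA i j h, hB i j h, add_zero]
  zero_mem' _ _ _ := rfl
  smul_mem' c A hA i j h := by rw [Matrix.smul_apply, hA i j h, smul_zero]

theorem mul_mem_upperBand {k : Type*} [Field k] {a b : ℕ} {A B : Matrix (Fin 4) (Fin 4) k}
    (hA : A ∈ upperBand k a) (hB : B ∈ upperBand k b) : A * B ∈ upperBand k (a + b) := by
  intro i j h
  rw [Matrix.mul_apply]
  refine Finset.sum_eq_zero fun l _ => ?_
  by_cases hl : (l : ℕ) < i + a
  · rw [hA i l hl, zero_mul]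
  · rw [hB l j (by omega), mul_zero]

theorem lie_mem_upperBand {k : Type*} [Field k] {m : ℕ} {A B : Matrix (Fin 4) (Fin 4) k}
    (hA : A ∈ upperBand k 1) (hB : B ∈ upperBand k m) : ⁅A, B⁆ ∈ upperBand k (m + 1) := by
  rw [Ring.lie_def]
  refine Submodule.sub_mem _ ?_ (mul_mem_upperBand hB hA)
  rw [add_comm m 1]
  exact mul_mem_upperBand hA hB

/-- The Lie algebra of strictly upper triangular `4 × 4` matrices. -/
def strictUpper (k : Type*) [Field k] : LieSubalgebra k (Matrix (Fin 4) (Fin 4) k) :=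
  { upperBand k 1 with
    lie_mem' := fun {A B} hA hB i j h => lie_mem_upperBand (m := 1) hA hB i j (by omega) }

/-- The regular nilpotent matrix `E₁₂ + E₂₃ + E₃₄`, the image of `v₁` and `w₂`. -/
def matX (k : Type*) [Field k] : Matrix (Fin 4) (Fin 4) k :=
  !![0, 1, 0, 0; 0, 0, 1, 0; 0, 0, 0, 1; 0, 0, 0, 0]

/-- The matrix `E₁₂ + E₃₄`, the image of `v₂` and `w₁`. -/
def matY (k : Type*) [Field k] : Matrix (Fin 4) (Fin 4) k :=
  !![0, 1, 0, 0; 0, 0, 0, 0; 0, 0, 0, 1; 0, 0, 0, 0]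

theorem matX_mem (k : Type*) [Field k] : matX k ∈ strictUpper k := by
  intro i j h
  fin_cases i <;> fin_cases j <;> simp [matX] at h ⊢

theorem matY_mem (k : Type*) [Field k] : matY k ∈ strictUpper k := by
  intro i j h
  fin_cases i <;> fin_cases j <;> simp [matY] at h ⊢

/-- The homomorphism from the free Lie algebra with `v₁, w₂ ↦ x` and `v₂, w₁ ↦ y`. -/
noncomputable def freeRep (k : Type*) [Field k] :
    FreeLieAlgebra k (Fin 4) →ₗ⁅k⁆ strictUpper k :=
  FreeLieAlgebra.lift k
    ![⟨matX k, matX_mem k⟩, ⟨matY k, matY_mem k⟩, ⟨matY k, matY_mem k⟩, ⟨matX k, matX_mem k⟩]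

theorem surfaceIdeal_le_ker (k : Type*) [Field k] : surfaceIdeal k ≤ (freeRep k).ker := by
  rw [surfaceIdeal, LieSubmodule.lieSpan_le, Set.singleton_subset_iff, SetLike.mem_coe,
    LieHom.mem_ker, surfaceRelator, map_add, LieHom.map_lie, LieHom.map_lie]
  simp only [freeRep, FreeLieAlgebra.lift_of_apply]
  exact add_eq_zero_iff_eq_neg.mpr (lie_skew _ _).symm

/-- The representation of `L` by strictly upper triangular matrices induced by `freeRep`. -/
noncomputable def surfaceRep (k : Type*) [Field k] : SurfaceLieAlgebra k →ₗ⁅k⁆ strictUpper k :=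
  { (surfaceIdeal k).toSubmodule.liftQ (freeRep k : FreeLieAlgebra k (Fin 4) →ₗ[k] strictUpper k)
      (fun _ hx => surfaceIdeal_le_ker k hx) with
    map_lie' := by
      intro a b
      induction a using Submodule.Quotient.induction_on with | _ a
      induction b using Submodule.Quotient.induction_on with | _ b
      exact (freeRep k).map_lie a b }

theorem surfaceRep_gen (k : Type*) [Field k] (i : Fin 4) :
    (surfaceRep k (surfaceGen k i) : Matrix (Fin 4) (Fin 4) k) =
      ![matX k, matY k, matY k, matX k] i := by
  change ((freeRep k (of k i) : strictUpper k) : Matrix (Fin 4) (Fin 4) k) = _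
  rw [freeRep, FreeLieAlgebra.lift_of_apply]
  fin_cases i <;> rfl

/-- With Mathlib's indexing `lowerCentralSeries … n` is `Fil^{n+1}`, whence the shift. -/
theorem surfaceRep_lowerCentralSeries (k : Type*) [Field k] (n : ℕ) :
    ∀ a ∈ LieModule.lowerCentralSeries k (SurfaceLieAlgebra k) (SurfaceLieAlgebra k) n,
      (surfaceRep k a : Matrix (Fin 4) (Fin 4) k) ∈ upperBand k (n + 1) := by
  induction n with
  | zero => exact fun a _ => (surfaceRep k a).2
  | succ n ih =>
    intro a ha
    rw [LieModule.lowerCentralSeries_succ, ← LieSubmodule.mem_toSubmodule,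
      LieSubmodule.lieIdeal_oper_eq_linear_span'] at ha
    induction ha using Submodule.span_induction with
    | mem a h =>
      obtain ⟨b, -, c, hc, rfl⟩ := h
      rw [LieHom.map_lie, LieSubalgebra.coe_bracket]
      exact lie_mem_upperBand (surfaceRep k b).2 (ih c hc)
    | zero => rw [map_zero]; exact Submodule.zero_mem _
    | add a b _ _ ha hb => rw [map_add]; exact Submodule.add_mem _ ha hb
    | smul c a _ ha => rw [map_smul]; exact Submodule.smul_mem _ c ha

theorem surfaceRep_eq_zero {k : Type*} [Field k] {a : SurfaceLieAlgebra k}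
    (ha : a ∈ LieModule.lowerCentralSeries k (SurfaceLieAlgebra k) (SurfaceLieAlgebra k) 3) :
    (surfaceRep k a : Matrix (Fin 4) (Fin 4) k) = 0 := by
  ext i j
  exact surfaceRep_lowerCentralSeries k 3 a ha i j (by omega)

theorem no_matrix {k : Type*} [Field k] [CharZero k] (D : Matrix (Fin 4) (Fin 4) k)
    (h₁ : ⁅matX k, D⁆ = 0) (h₂ : ⁅matY k, D⁆ - ⁅matY k, ⁅matX k, matY k⁆⁆ = 0) : False := by
  -- The `(1, 4)` entry of `⁅x, D⁆` is `D₂₄ - D₁₃`, which is also the `(1, 4)` entry of `⁅y, D⁆`.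
  have e₁ := congrFun (congrFun h₁ 0) 3
  have e₂ := congrFun (congrFun h₂ 0) 3
  simp [Ring.lie_def, matX, matY, Matrix.mul_apply, Fin.sum_univ_four] at e₁ e₂
  rw [e₁] at e₂
  norm_num at e₂

/-- There is no element `d` of `L = 𝔉/I` with `⁅v̄₁, d⁆ ∈ Fil⁴L` and
`⁅w̄₁, d⁆ − ⁅w̄₁, ⁅v̄₁, v̄₂⁆⁆ ∈ Fil⁴L`, where `Fil` denotes the lower central series
(so `Fil⁴L = LieModule.lowerCentralSeries k L L 3`). -/
theorem stmt_0 (k : Type*) [Field k] [CharZero k] :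
    ¬ ∃ d : SurfaceLieAlgebra k,
        ⁅surfaceGen k 0, d⁆ ∈
          LieModule.lowerCentralSeries k (SurfaceLieAlgebra k) (SurfaceLieAlgebra k) 3 ∧
        ⁅surfaceGen k 2, d⁆ - ⁅surfaceGen k 2, ⁅surfaceGen k 0, surfaceGen k 1⁆⁆ ∈
          LieModule.lowerCentralSeries k (SurfaceLieAlgebra k) (SurfaceLieAlgebra k) 3 := by
  rintro ⟨d, h₁, h₂⟩
  have e₁ := surfaceRep_eq_zero h₁
  have e₂ := surfaceRep_eq_zero h₂
  simp only [map_sub, LieHom.map_lie, AddSubgroupClass.coe_sub, LieSubalgebra.coe_bracket,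
    surfaceRep_gen] at e₁ e₂
  exact no_matrix _ e₁ e₂
end

section
/- Let k be a field of characteristic zero, let 𝔉 be the free Lie algebra over k on four generators v₁, v₂, w₁, w₂, let I be the Lie ideal of 𝔉 generated by the single element ⁅v₁,v₂⁆ + ⁅w₁,w₂⁆, and let L = 𝔉/I, with v̄₁, v̄₂, w̄₁, w̄₂ the images of the generators. Then for every x ∈ Fil²L, if ⁅v̄₁, x⁆ ∈ Fil⁴L then x ∈ Fil³L; equivalently, the map from Fil²L/Fil³L to Fil³L/Fil⁴L induced by the adjoint action of v̄₁ is injective. -/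
/-!
Modulo `Fil³L`, an element `x` of `Fil²L` is a combination `∑ cᵢⱼ ⁅gᵢ, gⱼ⁆` of brackets of
generators (`exists_sub_sum_lie_mem`), so the task is to read off the coefficients from `⁅g₀, x⁆`.

This is done with representations of `L` by strictly upper triangular `4 × 4` matrices. Given
vectors `p, q, r ∈ k⁴`, send `gᵢ` to the matrix with superdiagonal `(pᵢ, qᵢ, rᵢ)`. This respects the
defining relation of `L` as soon as `ω(p, q) = ω(q, r) = 0`, where `ω` is the standard symplectic
form on `k⁴`. Such a representation kills `Fil⁴L`, and for `r₀ = 0`, `p₀ = 1` the corner entry of the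
image of `⁅g₀, x⁆` is `∑ cᵢⱼ (qᵢ rⱼ - qⱼ rᵢ)` (`sum_mul_eq_zero`). Five choices of `(p, q, r)` show
that, with `aᵢⱼ = cᵢⱼ - cⱼᵢ`, one has `a₀₂ = a₀₃ = a₁₂ = a₁₃ = 0` and `a₀₁ = a₂₃`. Hence `x` is
congruent modulo `Fil³L` to a multiple of the relator, which vanishes in `L`.
-/

open FreeLieAlgebra

namespace SurfaceLie

attribute [local instance] LieRing.ofAssociativeRing

variable {k : Type*} [Field k]

/-! ### Generation of `L` and the first graded pieces -/

/-- The quotient map `𝔉 → L` as a morphism of Lie algebras. -/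
noncomputable def mkHom (k : Type*) [Field k] :
    FreeLieAlgebra k (Fin 4) →ₗ⁅k⁆ SurfaceLieAlgebra k :=
  { (surfaceIdeal k).toSubmodule.mkQ with
    map_lie' := fun {_ _} => rfl }

lemma mkHom_surjective : Function.Surjective (mkHom k) :=
  (surfaceIdeal k).toSubmodule.mkQ_surjective

lemma mkHom_of (i : Fin 4) : mkHom k (of k i) = surfaceGen k i := rfl

lemma lie_gen_relation :
    ⁅surfaceGen k 0, surfaceGen k 1⁆ + ⁅surfaceGen k 2, surfaceGen k 3⁆ = 0 := by
  simp only [← mkHom_of, ← LieHom.map_lie, ← map_add]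
  exact LieSubmodule.Quotient.mk_eq_zero'.mpr (LieSubmodule.subset_lieSpan rfl)

lemma mem_of_gen_mem (S : LieSubalgebra k (SurfaceLieAlgebra k))
    (h : ∀ i, surfaceGen k i ∈ S) (y : SurfaceLieAlgebra k) : y ∈ S := by
  obtain ⟨y, rfl⟩ := mkHom_surjective y
  -- The morphism `𝔉 → S ⊆ L` determined by the generators agrees with the quotient map.
  have key : S.incl.comp (FreeLieAlgebra.lift k fun i => (⟨surfaceGen k i, h i⟩ : S))
      = mkHom k := by
    apply FreeLieAlgebra.hom_ext
    intro i
    rw [LieHom.comp_apply, FreeLieAlgebra.lift_of_apply, mkHom_of]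
    rfl
  rw [← key, LieHom.comp_apply]
  exact SetLike.coe_mem _

/-- `lcs k n` is `Fil^{n+1}L`. -/
noncomputable abbrev lcs (k : Type*) [Field k] (n : ℕ) :
    LieSubmodule k (SurfaceLieAlgebra k) (SurfaceLieAlgebra k) :=
  LieModule.lowerCentralSeries k (SurfaceLieAlgebra k) (SurfaceLieAlgebra k) n

lemma lie_mem_lcs_succ {n : ℕ} (y : SurfaceLieAlgebra k) {z : SurfaceLieAlgebra k}
    (hz : z ∈ lcs k n) : ⁅y, z⁆ ∈ lcs k (n + 1) := by
  rw [lcs, LieModule.lowerCentralSeries_succ]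
  exact LieSubmodule.lie_mem_lie (LieSubmodule.mem_top y) hz

/-- As a `k`-vector space, `Fil^{n+2}L` is spanned by the brackets `⁅y, z⁆` with
`z ∈ Fil^{n+1}L`. -/
lemma lcs_succ_le {n : ℕ} (N : Submodule k (SurfaceLieAlgebra k))
    (h : ∀ y : SurfaceLieAlgebra k, ∀ z ∈ lcs k n, ⁅y, z⁆ ∈ N) :
    ∀ x ∈ lcs k (n + 1), x ∈ N := by
  intro x hx
  rw [lcs, LieModule.lowerCentralSeries_succ, ← LieSubmodule.mem_toSubmodule,
    LieSubmodule.lieIdeal_oper_eq_linear_span'] at hx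
  refine Submodule.span_le.mpr ?_ hx
  rintro _ ⟨y, -, z, hz, rfl⟩
  exact h y z hz

/-- `L/Fil²L` is spanned by the generators. -/
lemma exists_sub_sum_mem (y : SurfaceLieAlgebra k) :
    ∃ a : Fin 4 → k, y - ∑ i, a i • surfaceGen k i ∈ lcs k 1 := by
  let S : LieSubalgebra k (SurfaceLieAlgebra k) :=
    { carrier := {y | ∃ a : Fin 4 → k, y - ∑ i, a i • surfaceGen k i ∈ lcs k 1}
      add_mem' := by
        rintro x y ⟨a, ha⟩ ⟨b, hb⟩
        refine ⟨a + b, ?_⟩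
        convert add_mem ha hb using 1
        simp only [Pi.add_apply, add_smul, Finset.sum_add_distrib]
        abel
      zero_mem' := ⟨0, by simp⟩
      smul_mem' := by
        rintro t x ⟨a, ha⟩
        refine ⟨t • a, ?_⟩
        convert (lcs k 1).toSubmodule.smul_mem t ha using 1
        simp only [Pi.smul_apply, smul_sub, Finset.smul_sum, smul_assoc, LieSubmodule.mem_toSubmodule]
      lie_mem' := by
        rintro x y - -
        refine ⟨0, ?_⟩
        simpa using lie_mem_lcs_succ (n := 0) x (z := y) (by simp) }
  refine mem_of_gen_mem S (fun i => ⟨Pi.single i 1, ?_⟩) y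
  simp [Pi.single_apply]

/-- `Fil²L/Fil³L` is spanned by the brackets of two generators. -/
lemma exists_sub_sum_lie_mem (x : SurfaceLieAlgebra k) (hx : x ∈ lcs k 1) :
    ∃ c : Fin 4 → Fin 4 → k,
      x - ∑ i, ∑ j, c i j • ⁅surfaceGen k i, surfaceGen k j⁆ ∈ lcs k 2 := by
  let N : Submodule k (SurfaceLieAlgebra k) :=
    { carrier := {x | ∃ c : Fin 4 → Fin 4 → k,
        x - ∑ i, ∑ j, c i j • ⁅surfaceGen k i, surfaceGen k j⁆ ∈ lcs k 2}
      add_mem' := by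
        rintro x y ⟨a, ha⟩ ⟨b, hb⟩
        refine ⟨a + b, ?_⟩
        convert add_mem ha hb using 1
        simp only [Pi.add_apply, add_smul, Finset.sum_add_distrib]
        abel
      zero_mem' := ⟨0, by simp⟩
      smul_mem' := by
        rintro t x ⟨a, ha⟩
        refine ⟨t • a, ?_⟩
        convert (lcs k 2).toSubmodule.smul_mem t ha using 1
        simp only [Pi.smul_apply, smul_sub, Finset.smul_sum, smul_assoc, LieSubmodule.mem_toSubmodule] }
  refine lcs_succ_le N (n := 0) (fun y z _ => ?_) x hx
  obtain ⟨a, ha⟩ := exists_sub_sum_mem y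
  obtain ⟨b, hb⟩ := exists_sub_sum_mem z
  refine ⟨fun i j => a i * b j, ?_⟩
  have h₁ := neg_mem (lie_mem_lcs_succ z ha)
  rw [lie_skew] at h₁
  convert add_mem h₁ (lie_mem_lcs_succ (∑ i, a i • surfaceGen k i) hb) using 1
  have h₂ : ⁅∑ i, a i • surfaceGen k i, ∑ j, b j • surfaceGen k j⁆
      = ∑ i, ∑ j, (a i * b j) • ⁅surfaceGen k i, surfaceGen k j⁆ := by
    rw [sum_lie_sum]
    simp only [smul_lie, lie_smul, smul_smul, mul_comm]
  rw [sub_lie, lie_sub, h₂]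
  abel

/-! ### Representations by strictly upper triangular matrices -/

/-- The matrices whose `(i, j)` entry vanishes for `j < i + n`. -/
def upper (k : Type*) [Field k] (n : ℕ) : Submodule k (Matrix (Fin 4) (Fin 4) k) where
  carrier := {M | ∀ i j : Fin 4, (j : ℕ) < i + n → M i j = 0}
  add_mem' := by
    intro M N hM hN i j h
    simp [hM i j h, hN i j h]
  zero_mem' := by simp
  smul_mem' := by
    intro t M hM i j h
    simp [hM i j h]

lemma mul_mem_upper {m n : ℕ} {M N : Matrix (Fin 4) (Fin 4) k}
    (hM : M ∈ upper k m) (hN : N ∈ upper k n) : M * N ∈ upper k (m + n) := by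
  intro i j h
  rw [Matrix.mul_apply]
  refine Finset.sum_eq_zero fun l _ => ?_
  by_cases hl : (l : ℕ) < i + m
  · rw [hM i l hl, zero_mul]
  · rw [hN l j (by omega), mul_zero]

lemma lie_mem_upper {m n : ℕ} {M N : Matrix (Fin 4) (Fin 4) k}
    (hM : M ∈ upper k m) (hN : N ∈ upper k n) : ⁅M, N⁆ ∈ upper k (n + m) := by
  rw [Ring.lie_def]
  refine sub_mem ?_ (mul_mem_upper hN hM)
  rw [add_comm]
  exact mul_mem_upper hM hN

lemma upper_mono {m n : ℕ} (h : m ≤ n) : upper k n ≤ upper k m :=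
  fun _ hM i j hij => hM i j (by omega)

/-- The `4 × 4` matrix with superdiagonal `(a, b, c)`. -/
def superdiag (a b c : k) : Matrix (Fin 4) (Fin 4) k :=
  !![0, a, 0, 0; 0, 0, b, 0; 0, 0, 0, c; 0, 0, 0, 0]

lemma superdiag_mem (a b c : k) : superdiag a b c ∈ upper k 1 := by
  intro i j h
  fin_cases i <;> fin_cases j <;> simp [superdiag] at h ⊢

lemma lie_superdiag (a b c a' b' c' : k) :
    ⁅superdiag a b c, superdiag a' b' c'⁆ =
      !![0, 0, a * b' - a' * b, 0; 0, 0, 0, b * c' - b' * c; 0, 0, 0, 0; 0, 0, 0, 0] := by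
  rw [Ring.lie_def]
  ext i j
  fin_cases i <;> fin_cases j <;> simp [superdiag]

/-- The standard symplectic form on `k⁴`, for which `(e₀, e₁)` and `(e₂, e₃)` are
hyperbolic pairs. -/
def symp (p q : Fin 4 → k) : k :=
  p 0 * q 1 - p 1 * q 0 + (p 2 * q 3 - p 3 * q 2)

/-- If `p` and `r` are orthogonal to `q` for the symplectic form, then `gᵢ ↦ superdiag pᵢ qᵢ rᵢ`
extends to a representation of `L`. -/
lemma exists_rep (p q r : Fin 4 → k) (hpq : symp p q = 0) (hqr : symp q r = 0) :
    ∃ φ : SurfaceLieAlgebra k →ₗ⁅k⁆ Matrix (Fin 4) (Fin 4) k,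
      ∀ i, φ (surfaceGen k i) = superdiag (p i) (q i) (r i) := by
  let ψ : FreeLieAlgebra k (Fin 4) →ₗ⁅k⁆ Matrix (Fin 4) (Fin 4) k :=
    FreeLieAlgebra.lift k fun i => superdiag (p i) (q i) (r i)
  have hψ : ∀ i, ψ (of k i) = superdiag (p i) (q i) (r i) :=
    fun i => FreeLieAlgebra.lift_of_apply _ i
  have hker : surfaceIdeal k ≤ ψ.ker := by
    refine LieSubmodule.lieSpan_le.mpr ?_
    rw [Set.singleton_subset_iff, SetLike.mem_coe, LieHom.mem_ker, surfaceRelator, map_add,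
      LieHom.map_lie, LieHom.map_lie]
    simp only [hψ, lie_superdiag]
    unfold symp at hpq hqr
    ext i j
    fin_cases i <;> fin_cases j <;> simp
    · linear_combination hpq
    · linear_combination hqr
  refine ⟨{ (surfaceIdeal k).toSubmodule.liftQ
      (ψ : FreeLieAlgebra k (Fin 4) →ₗ[k] Matrix (Fin 4) (Fin 4) k) hker with
    map_lie' := ?_ }, hψ⟩
  intro x y
  obtain ⟨x, rfl⟩ := mkHom_surjective x
  obtain ⟨y, rfl⟩ := mkHom_surjective y
  exact LieHom.map_lie ψ x y

lemma rep_mem_upper (φ : SurfaceLieAlgebra k →ₗ⁅k⁆ Matrix (Fin 4) (Fin 4) k)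
    (h : ∀ i, φ (surfaceGen k i) ∈ upper k 1) (n : ℕ) :
    ∀ x ∈ lcs k n, φ x ∈ upper k (n + 1) := by
  have h1 : ∀ y, φ y ∈ upper k 1 := by
    let U : LieSubalgebra k (Matrix (Fin 4) (Fin 4) k) :=
      { upper k 1 with
        lie_mem' := fun {_ _} hM hN => upper_mono (by omega) (lie_mem_upper hM hN) }
    exact mem_of_gen_mem (U.comap φ) h
  induction n with
  | zero => exact fun x _ => h1 x
  | succ n ih =>
    refine lcs_succ_le ((upper k (n + 1 + 1)).comap
      (φ : SurfaceLieAlgebra k →ₗ[k] Matrix (Fin 4) (Fin 4) k)) fun y z hz => ?_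
    change φ ⁅y, z⁆ ∈ upper k (n + 1 + 1)
    rw [LieHom.map_lie]
    exact lie_mem_upper (h1 y) (ih z hz)

/-- The linear relation on the coefficients of `x` obtained from one matrix representation, by
looking at the corner entry of the image of `⁅g₀, x⁆`. -/
lemma sum_mul_eq_zero (p q r : Fin 4 → k) (hpq : symp p q = 0) (hqr : symp q r = 0)
    (hp : p 0 = 1) (hr : r 0 = 0) (x : SurfaceLieAlgebra k) (c : Fin 4 → Fin 4 → k)
    (hc : x - ∑ i, ∑ j, c i j • ⁅surfaceGen k i, surfaceGen k j⁆ ∈ lcs k 2)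
    (hx : ⁅surfaceGen k 0, x⁆ ∈ lcs k 3) :
    ∑ i, ∑ j, c i j * (q i * r j - q j * r i) = 0 := by
  obtain ⟨φ, hφ⟩ := exists_rep p q r hpq hqr
  have hU := rep_mem_upper φ fun i => hφ i ▸ superdiag_mem _ _ _
  -- Since `p₀ = 1` and `r₀ = 0`, the corner entry of `⁅φ g₀, M⁆` is `M 1 3`.
  have h₁ : φ x 1 3 = 0 := by
    have h := hU 3 _ hx 0 3 (by simp)
    rw [LieHom.map_lie, hφ, hp, hr, Ring.lie_def, Matrix.sub_apply,
      Matrix.mul_apply, Matrix.mul_apply, Fin.sum_univ_four, Fin.sum_univ_four] at h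
    simpa [superdiag] using h
  have h₂ := hU 2 _ hc 1 3 (by simp)
  simp only [map_sub, map_sum, map_smul, LieHom.map_lie, hφ, lie_superdiag, Matrix.sub_apply,
    Matrix.sum_apply, Matrix.smul_apply, h₁] at h₂
  simpa using h₂

end SurfaceLie


/-- For every `x ∈ Fil²L` of `L = 𝔉/I`, if `⁅v̄₁, x⁆ ∈ Fil⁴L` then `x ∈ Fil³L`;
here `Fil` denotes the lower central series, `Fil^{n+1}L = LieModule.lowerCentralSeries k L L n`.
Equivalently, the map `Fil²L/Fil³L → Fil³L/Fil⁴L` induced by `ad v̄₁` is injective. -/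
theorem stmt_2 (k : Type*) [Field k] [CharZero k] :
    ∀ x : SurfaceLieAlgebra k,
      x ∈ LieModule.lowerCentralSeries k (SurfaceLieAlgebra k) (SurfaceLieAlgebra k) 1 →
      ⁅surfaceGen k 0, x⁆ ∈
        LieModule.lowerCentralSeries k (SurfaceLieAlgebra k) (SurfaceLieAlgebra k) 3 →
      x ∈ LieModule.lowerCentralSeries k (SurfaceLieAlgebra k) (SurfaceLieAlgebra k) 2 := by
  intro x hx hx'
  obtain ⟨c, hc⟩ := SurfaceLie.exists_sub_sum_lie_mem x hx
  have key := fun p q r hpq hqr hp hr =>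
    SurfaceLie.sum_mul_eq_zero p q r hpq hqr hp hr x c hc hx'
  have h02 := key ![1, 0, 0, 0] ![1, 0, 0, 0] ![0, 0, 1, 0]
    (by simp [SurfaceLie.symp]) (by simp [SurfaceLie.symp]) (by simp) (by simp)
  have h03 := key ![1, 0, 0, 0] ![1, 0, 0, 0] ![0, 0, 0, 1]
    (by simp [SurfaceLie.symp]) (by simp [SurfaceLie.symp]) (by simp) (by simp)
  have h21 := key ![1, 0, 0, 0] ![0, 0, 1, 0] ![0, 1, 0, 0]
    (by simp [SurfaceLie.symp]) (by simp [SurfaceLie.symp]) (by simp) (by simp)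
  have h31 := key ![1, 0, 0, 0] ![0, 0, 0, 1] ![0, 1, 0, 0]
    (by simp [SurfaceLie.symp]) (by simp [SurfaceLie.symp]) (by simp) (by simp)
  -- `(e₀ + e₂) ∧ (e₁ - e₃)` is `ω`-isotropic and nonzero on `⁅g₀, g₁⁆ = -⁅g₂, g₃⁆`.
  have h01 := key ![1, 0, 1, 0] ![1, 0, 1, 0] ![0, 1, 0, -1]
    (by simp [SurfaceLie.symp]) (by simp [SurfaceLie.symp]) (by simp) (by simp)
  simp [Fin.sum_univ_four] at h02 h03 h21 h31 h01
  have hsum : ∑ i, ∑ j, c i j • ⁅surfaceGen k i, surfaceGen k j⁆ = 0 := by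
    have hrel := SurfaceLie.lie_gen_relation (k := k)
    have e : ∀ i j, ⁅surfaceGen k i, surfaceGen k j⁆ = -⁅surfaceGen k j, surfaceGen k i⁆ :=
      fun i j => (lie_skew _ _).symm
    simp only [Fin.sum_univ_four, lie_self, e 1 0, e 2 0, e 3 0, e 2 1, e 3 1, e 3 2]
    linear_combination (norm := module) (c 0 1 - c 1 0) • hrel
      + h02 • ⁅surfaceGen k 0, surfaceGen k 2⁆ + h03 • ⁅surfaceGen k 0, surfaceGen k 3⁆
      - h21 • ⁅surfaceGen k 1, surfaceGen k 2⁆ - h31 • ⁅surfaceGen k 1, surfaceGen k 3⁆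
      - (h01 + h03 - h21) • ⁅surfaceGen k 2, surfaceGen k 3⁆
  rwa [hsum, sub_zero] at hc
end

section
/- Let k be a field of characteristic zero, let 𝔉 be the free Lie algebra over k on four generators v₁, v₂, w₁, w₂, let I be the Lie ideal of 𝔉 generated by the single element ⁅v₁,v₂⁆ + ⁅w₁,w₂⁆, and let L = 𝔉/I, with v̄₁, v̄₂, w̄₁, w̄₂ the images of the generators. If d ∈ L satisfies ⁅v̄₁, d⁆ ∈ Fil³L and ⁅w̄₁, d⁆ ∈ Fil³L, then d ∈ Fil²L. -/
/-!
The proof maps `L = 𝔉/I` to an explicit two-step nilpotent Lie algebra `SurfaceModel k`, with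
underlying space `k⁴ × k³`: the second factor is central, and the bracket `k⁴ × k⁴ → k³` is given
by the alternating forms `v₁* ∧ v₂* - w₁* ∧ w₂*`, `v₁* ∧ w₁*` and `v₁* ∧ w₂*`. The relator
`⁅v₁, v₂⁆ + ⁅w₁, w₂⁆` is killed by all three, so the assignment `gᵢ ↦ (eᵢ, 0)` defines a
homomorphism `toModel : L → SurfaceModel k`, which kills `Fil³L` because the model is two-step
nilpotent. As `L` is generated by the `gᵢ`, every `d ∈ L` is congruent modulo `Fil²L` to
`∑ cᵢ gᵢ`, where `c` is the `k⁴`-component of `toModel d` (`sub_sum_mem`).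
If `⁅v̄₁, d⁆ ∈ Fil³L`, the three forms evaluated at `(e₀, c)` give `c₁ = c₂ = c₃ = 0`; if moreover
`⁅w̄₁, d⁆ ∈ Fil³L`, the form `v₁* ∧ w₁*` at `(e₂, c)` gives `c₀ = 0`. Hence `d ∈ Fil²L`.
-/

open FreeLieAlgebra

/-- The space `k⁴ × k³` underlying a two-step nilpotent quotient of `L`. It is a type synonym, so
that its bracket cannot clash with the componentwise one on a product. -/
def SurfaceModel (k : Type*) : Type _ := (Fin 4 → k) × (Fin 3 → k)

namespace SurfaceModel

variable {k : Type*} [Field k]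

instance : AddCommGroup (SurfaceModel k) :=
  inferInstanceAs (AddCommGroup ((Fin 4 → k) × (Fin 3 → k)))

instance : Module k (SurfaceModel k) :=
  inferInstanceAs (Module k ((Fin 4 → k) × (Fin 3 → k)))

/-- The `k³`-valued alternating form on `k⁴` with components `v₁* ∧ v₂* - w₁* ∧ w₂*`,
`v₁* ∧ w₁*` and `v₁* ∧ w₂*`, the coordinates being ordered `v₁, v₂, w₁, w₂`. -/
def form (a b : Fin 4 → k) : Fin 3 → k :=
  ![(a 0 * b 1 - a 1 * b 0) - (a 2 * b 3 - a 3 * b 2), a 0 * b 2 - a 2 * b 0,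
    a 0 * b 3 - a 3 * b 0]

lemma form_add_left (a b c : Fin 4 → k) : form (a + b) c = form a c + form b c := by
  ext i; fin_cases i <;> simp [form] <;> ring

lemma form_add_right (a b c : Fin 4 → k) : form a (b + c) = form a b + form a c := by
  ext i; fin_cases i <;> simp [form] <;> ring

lemma form_smul_right (t : k) (a b : Fin 4 → k) : form a (t • b) = t • form a b := by
  ext i; fin_cases i <;> simp [form] <;> ring

lemma form_self (a : Fin 4 → k) : form a a = 0 := by
  ext i; fin_cases i <;> simp [form] <;> ring

lemma form_zero_left (a : Fin 4 → k) : form 0 a = 0 := by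
  ext i; fin_cases i <;> simp [form]

lemma form_zero_right (a : Fin 4 → k) : form a 0 = 0 := by
  ext i; fin_cases i <;> simp [form]

instance : Bracket (SurfaceModel k) (SurfaceModel k) where
  bracket x y := ((0, form x.1 y.1) : (Fin 4 → k) × (Fin 3 → k))

lemma lie_fst (x y : SurfaceModel k) : ⁅x, y⁆.1 = 0 := rfl

lemma lie_snd (x y : SurfaceModel k) : ⁅x, y⁆.2 = form x.1 y.1 := rfl

lemma add_fst (x y : SurfaceModel k) : (x + y).1 = x.1 + y.1 := rfl

lemma add_snd (x y : SurfaceModel k) : (x + y).2 = x.2 + y.2 := rfl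

lemma smul_fst (t : k) (x : SurfaceModel k) : (t • x).1 = t • x.1 := rfl

lemma smul_snd (t : k) (x : SurfaceModel k) : (t • x).2 = t • x.2 := rfl

lemma zero_fst : (0 : SurfaceModel k).1 = 0 := rfl

lemma zero_snd : (0 : SurfaceModel k).2 = 0 := rfl

lemma lie_lie_eq_zero (x y z : SurfaceModel k) : ⁅x, ⁅y, z⁆⁆ = 0 :=
  Prod.ext rfl (form_zero_right x.1)

lemma lie_lie_eq_zero_left (x y z : SurfaceModel k) : ⁅⁅x, y⁆, z⁆ = 0 :=
  Prod.ext rfl (form_zero_left z.1)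

instance : LieRing (SurfaceModel k) where
  add_lie x y z := Prod.ext
    (by simp only [lie_fst, add_fst, add_zero])
    (by simp only [lie_snd, add_snd, add_fst, form_add_left])
  lie_add x y z := Prod.ext
    (by simp only [lie_fst, add_fst, add_zero])
    (by simp only [lie_snd, add_snd, add_fst, form_add_right])
  lie_self x := Prod.ext rfl (form_self x.1)
  leibniz_lie x y z := by
    simp only [lie_lie_eq_zero, lie_lie_eq_zero_left, add_zero]

instance : LieAlgebra k (SurfaceModel k) where
  lie_smul t x y := Prod.ext
    (by simp only [lie_fst, smul_fst, smul_zero])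
    (by simp only [lie_snd, smul_snd, smul_fst, form_smul_right])

lemma lowerCentralSeries_two :
    LieModule.lowerCentralSeries k (SurfaceModel k) (SurfaceModel k) 2 = ⊥ := by
  have h1 : LieModule.lowerCentralSeries k (SurfaceModel k) (SurfaceModel k) 1 ≤
      LieModule.maxTrivSubmodule k (SurfaceModel k) (SurfaceModel k) := by
    rw [LieModule.lowerCentralSeries_succ, LieSubmodule.lie_le_iff]
    intro x _ m _ y
    exact lie_lie_eq_zero y x m
  rw [eq_bot_iff, LieModule.lowerCentralSeries_succ, LieSubmodule.lie_le_iff]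
  intro x _ m hm
  exact (LieSubmodule.mem_bot _).2 (h1 hm x)

/-- The element `(eᵢ, 0)`, image of the `i`-th generator. -/
def gen (k : Type*) [Field k] (i : Fin 4) : SurfaceModel k :=
  ((Pi.single i 1, 0) : (Fin 4 → k) × (Fin 3 → k))

lemma gen_fst (i : Fin 4) : (gen k i).1 = Pi.single i 1 := rfl

lemma surfaceIdeal_le_ker : surfaceIdeal k ≤ (lift k (gen k)).ker := by
  rw [surfaceIdeal, LieSubmodule.lieSpan_le, Set.singleton_subset_iff, SetLike.mem_coe,
    LieHom.mem_ker, surfaceRelator]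
  simp only [map_add, LieHom.map_lie, lift_of_apply]
  refine Prod.ext (by simp only [add_fst, lie_fst, add_zero, zero_fst]) ?_
  simp only [add_snd, lie_snd, zero_snd, gen_fst]
  ext i
  fin_cases i <;> simp [form]

/-- The homomorphism `L → SurfaceModel k` sending the `i`-th generator to `(eᵢ, 0)`. -/
noncomputable def toModel (k : Type*) [Field k] : SurfaceLieAlgebra k →ₗ⁅k⁆ SurfaceModel k :=
  { (surfaceIdeal k).toSubmodule.liftQ (lift k (gen k) : FreeLieAlgebra k (Fin 4) →ₗ[k] SurfaceModel k)
      (fun _ hx => LinearMap.mem_ker.2 <| LieHom.mem_ker.1 (surfaceIdeal_le_ker hx)) with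
    map_lie' := by
      rintro ⟨x⟩ ⟨y⟩
      exact (lift k (gen k)).map_lie x y }

lemma toModel_gen (i : Fin 4) : toModel k (surfaceGen k i) = gen k i :=
  lift_of_apply (gen k) i

/-- The model is two-step nilpotent, so `toModel` kills `Fil³L`. -/
lemma toModel_eq_zero {x : SurfaceLieAlgebra k}
    (hx : x ∈ LieModule.lowerCentralSeries k (SurfaceLieAlgebra k) (SurfaceLieAlgebra k) 2) :
    toModel k x = 0 := by
  have h := LieIdeal.map_lowerCentralSeries_le (f := toModel k) 2 (LieIdeal.mem_map hx)
  rwa [lowerCentralSeries_two, LieSubmodule.mem_bot] at h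

/-- The free Lie algebra is generated by its generators. -/
lemma mem_of_forall_of_mem {X : Type*} (S : LieSubalgebra k (FreeLieAlgebra k X))
    (hS : ∀ i, of k i ∈ S) (x : FreeLieAlgebra k X) : x ∈ S := by
  -- The homomorphism to `S` given by the universal property is a section of the inclusion.
  have h : S.incl.comp (lift k fun i => (⟨of k i, hS i⟩ : S)) = LieHom.id := by
    apply hom_ext
    intro i
    simp
  have hx := LieHom.congr_fun h x
  rw [LieHom.comp_apply, LieHom.id_apply] at hx
  rw [← hx]
  exact Subtype.property _

/-- A property of elements of `L` holds everywhere if it holds for the generators and is stable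
under the Lie algebra operations. -/
lemma surface_induction {P : SurfaceLieAlgebra k → Prop} (hgen : ∀ i, P (surfaceGen k i))
    (hadd : ∀ x y, P x → P y → P (x + y)) (hsmul : ∀ (t : k) x, P x → P (t • x))
    (hlie : ∀ x y : SurfaceLieAlgebra k, P x → P y → P ⁅x, y⁆) (d : SurfaceLieAlgebra k) :
    P d := by
  let S : LieSubalgebra k (FreeLieAlgebra k (Fin 4)) :=
    { carrier := {x | P (LieSubmodule.Quotient.mk (N := surfaceIdeal k) x)}
      add_mem' := fun hx hy => hadd _ _ hx hy
      zero_mem' := by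
        have h := hsmul 0 _ (hgen 0)
        rwa [zero_smul] at h
      smul_mem' := fun t _ hx => hsmul t _ hx
      lie_mem' := fun hx hy => hlie _ _ hx hy }
  obtain ⟨x, rfl⟩ := LieSubmodule.Quotient.surjective_mk' (surfaceIdeal k) d
  exact mem_of_forall_of_mem S hgen x

/-- Modulo `Fil²L`, an element of `L` is the combination of the generators whose coefficients are
the `k⁴`-component of its image in the model. -/
lemma sub_sum_mem (d : SurfaceLieAlgebra k) :
    d - ∑ i, (toModel k d).1 i • surfaceGen k i ∈
      LieModule.lowerCentralSeries k (SurfaceLieAlgebra k) (SurfaceLieAlgebra k) 1 := by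
  let P (d : SurfaceLieAlgebra k) : Prop := d - ∑ i, (toModel k d).1 i • surfaceGen k i ∈
      LieModule.lowerCentralSeries k (SurfaceLieAlgebra k) (SurfaceLieAlgebra k) 1
  have hadd : ∀ x y, P x → P y → P (x + y) := by
    intro x y hx hy
    have h := add_mem hx hy
    simp only [P, map_add, add_fst, Pi.add_apply, add_smul, Finset.sum_add_distrib]
    rwa [add_sub_add_comm]
  have hsmul : ∀ (t : k) x, P x → P (t • x) := by
    intro t x hx
    have h := SMulMemClass.smul_mem t hx
    simp only [P, map_smul, smul_fst, Pi.smul_apply, smul_assoc, ← Finset.smul_sum]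
    rwa [← smul_sub]
  have hlie : ∀ x y : SurfaceLieAlgebra k, P ⁅x, y⁆ := by
    intro x y
    simp only [P, LieHom.map_lie, lie_fst, Pi.zero_apply, zero_smul, Finset.sum_const_zero,
      sub_zero]
    rw [LieModule.lowerCentralSeries_succ]
    exact LieSubmodule.lie_mem_lie (LieSubmodule.mem_top _) (LieSubmodule.mem_top _)
  have hgen : ∀ i, P (surfaceGen k i) := by
    intro i
    simp [P, toModel_gen, gen_fst, Pi.single_apply]
  exact surface_induction hgen hadd hsmul (fun x y _ _ => hlie x y) d

end SurfaceModel

open SurfaceModel in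
/-- If `d ∈ L = 𝔉/I` satisfies `⁅v̄₁, d⁆ ∈ Fil³L` and `⁅w̄₁, d⁆ ∈ Fil³L`, then
`d ∈ Fil²L`; here `Fil` denotes the lower central series,
`Fil^{n+1}L = LieModule.lowerCentralSeries k L L n`. -/
theorem stmt_3 (k : Type*) [Field k] [CharZero k] :
    ∀ d : SurfaceLieAlgebra k,
      ⁅surfaceGen k 0, d⁆ ∈
        LieModule.lowerCentralSeries k (SurfaceLieAlgebra k) (SurfaceLieAlgebra k) 2 →
      ⁅surfaceGen k 2, d⁆ ∈
        LieModule.lowerCentralSeries k (SurfaceLieAlgebra k) (SurfaceLieAlgebra k) 2 →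
      d ∈ LieModule.lowerCentralSeries k (SurfaceLieAlgebra k) (SurfaceLieAlgebra k) 1 := by
  intro d hv hw
  have hv' := congrArg Prod.snd (toModel_eq_zero hv)
  have hw' := congrArg Prod.snd (toModel_eq_zero hw)
  rw [LieHom.map_lie, toModel_gen, lie_snd, gen_fst, zero_snd] at hv' hw'
  have h1 : (toModel k d).1 1 = 0 := by
    simpa [form, Pi.single_apply] using congrFun hv' 0
  have h2 : (toModel k d).1 2 = 0 := by
    simpa [form, Pi.single_apply] using congrFun hv' 1
  have h3 : (toModel k d).1 3 = 0 := by
    simpa [form, Pi.single_apply] using congrFun hv' 2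
  have h0 : (toModel k d).1 0 = 0 := by
    simpa [form, Pi.single_apply] using congrFun hw' 1
  have h := sub_sum_mem d
  simpa [Fin.sum_univ_four, h0, h1, h2, h3] using h
end

section
/- Let k be a field, g ≥ 1 an integer, L a Lie algebra over k, and w₁, …, w_{2g} ∈ L elements whose images span the quotient vector space L/⁅L,L⁆ (equivalently, L is the sum of the k-span of {w₁,…,w_{2g}} and the derived ideal ⁅L,L⁆). Suppose z ∈ L satisfies z − Σ_{i=1}^{g} ⁅w_{2i−1}, w_{2i}⁆ ∈ Fil³L. Then for every integer q ≥ 2 there exist elements w'₁, …, w'_{2g} ∈ L with w'ᵢ − wᵢ ∈ Fil²L for every i, such that z − Σ_{i=1}^{g} ⁅w'_{2i−1}, w'_{2i}⁆ ∈ Fil^{q+1}L. -/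
/-!
Successive approximation. Write `F n = lowerCentralSeries k L L n`, so `F n = Fil^{n+1}L`, and
suppose the current error `d = z - symplecticSum g w'` lies in `F (n + 1) = ⁅L, F n⁆` with `n ≥ 1`.
Since `L` is spanned by the `w j` modulo `F 1`, and `⁅F 1, F n⁆ ⊆ F (n + 2)`
(`lie_mem_lcs_add_two`), one can write `d ≡ ∑ j, ⁅w j, u j⁆` modulo `F (n + 2)` with all `u j ∈ F n`
(`exists_lie_sum_approx`). Replacing each pair `(a, b) = (w' (2i), w' (2i+1))` by
`(a - u (2i+1), b + u (2i))` changes `⁅a, b⁆` by `⁅a, u (2i)⁆ + ⁅b, u (2i+1)⁆` up to a term of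
`⁅F n, F n⁆ ⊆ F (n + 2)`, and `w'` may be exchanged for `w` here since `w' j - w j ∈ F 1`. The new
error therefore lies in `F (n + 2)`.
-/

/-- The "symplectic" sum `∑_{i=1}^{g} ⁅w_{2i-1}, w_{2i}⁆` associated to a family
`w : Fin (2*g) → L` (zero-indexed, so the `i`-th summand is `⁅w (2i), w (2i+1)⁆`). -/
def symplecticSum {L : Type*} [LieRing L] (g : ℕ) (w : Fin (2 * g) → L) : L :=
  ∑ i : Fin g, ⁅w ⟨2 * i.1, by have := i.2; omega⟩, w ⟨2 * i.1 + 1, by have := i.2; omega⟩⁆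

open LieModule

/-- `⁅Fil²L, FilᵐL⁆ ⊆ Fil^{m+2}L`: by the Jacobi identity, bracketing with a commutator is a
difference of two-fold brackets. -/
lemma lie_mem_lcs_add_two {k L : Type*} [Field k] [LieRing L] [LieAlgebra k L] (n : ℕ)
    {f y : L} (hf : f ∈ lowerCentralSeries k L L 1) (hy : y ∈ lowerCentralSeries k L L n) :
    ⁅f, y⁆ ∈ lowerCentralSeries k L L (n + 2) := by
  have step : ∀ (m : ℕ) (a b : L), b ∈ lowerCentralSeries k L L m →
      ⁅a, b⁆ ∈ lowerCentralSeries k L L (m + 1) := fun m a b hb => by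
    rw [lowerCentralSeries_succ]
    exact LieSubmodule.lie_mem_lie (LieSubmodule.mem_top a) hb
  rw [lowerCentralSeries_succ, ← LieSubmodule.mem_toSubmodule,
    LieSubmodule.lieIdeal_oper_eq_linear_span'] at hf
  induction hf using Submodule.span_induction with
  | mem x hx =>
    obtain ⟨a, -, b, -, rfl⟩ := hx
    rw [lie_lie]
    exact sub_mem (step _ _ _ (step _ _ _ hy)) (step _ _ _ (step _ _ _ hy))
  | zero => simp
  | add a b _ _ ha hb => rw [add_lie]; exact add_mem ha hb
  | smul c a _ ha => rw [smul_lie]; exact SMulMemClass.smul_mem c ha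

/-- The multiplication map `⨁ⱼ FilᵐL → gr^{m+1}L`, `u ↦ ∑ⱼ ⁅wⱼ, uⱼ⁆`, is surjective as soon as
the `wⱼ` generate `L` modulo `Fil²L`. -/
lemma exists_lie_sum_approx {k L ι : Type*} [Field k] [LieRing L] [LieAlgebra k L] [Fintype ι]
    (w : ι → L) (hspan : Submodule.span k (Set.range w) ⊔
        (lowerCentralSeries k L L 1).toSubmodule = ⊤) (n : ℕ) {d : L}
    (hd : d ∈ lowerCentralSeries k L L (n + 1)) :
    ∃ u : ι → L, (∀ j, u j ∈ lowerCentralSeries k L L n) ∧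
      d - ∑ j, ⁅w j, u j⁆ ∈ lowerCentralSeries k L L (n + 2) := by
  rw [lowerCentralSeries_succ, ← LieSubmodule.mem_toSubmodule,
    LieSubmodule.lieIdeal_oper_eq_linear_span'] at hd
  induction hd using Submodule.span_induction with
  | mem d hd =>
    obtain ⟨x, -, y, hy, rfl⟩ := hd
    have hx : x ∈ Submodule.span k (Set.range w) ⊔
        (lowerCentralSeries k L L 1).toSubmodule := hspan ▸ Submodule.mem_top
    obtain ⟨s, hs, f, hf, rfl⟩ := Submodule.mem_sup.mp hx
    obtain ⟨c, rfl⟩ := (Submodule.mem_span_range_iff_exists_fun k).mp hs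
    refine ⟨fun j => c j • y, fun j => SMulMemClass.smul_mem _ hy, ?_⟩
    have : ⁅∑ j, c j • w j + f, y⁆ - ∑ j, ⁅w j, c j • y⁆ = ⁅f, y⁆ := by
      simp [add_lie, sum_lie]
    rw [this]
    exact lie_mem_lcs_add_two n hf hy
  | zero => exact ⟨0, fun _ => zero_mem _, by simp⟩
  | add a b _ _ ha hb =>
    obtain ⟨u, hu, hau⟩ := ha
    obtain ⟨v, hv, hbv⟩ := hb
    refine ⟨u + v, fun j => add_mem (hu j) (hv j), ?_⟩
    convert add_mem hau hbv using 1
    simp only [Pi.add_apply, lie_add, Finset.sum_add_distrib]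
    abel
  | smul c a _ ha =>
    obtain ⟨u, hu, hau⟩ := ha
    refine ⟨c • u, fun j => SMulMemClass.smul_mem c (hu j), ?_⟩
    convert SMulMemClass.smul_mem c hau using 1
    simp [smul_sub, Finset.smul_sum]

lemma sum_fin_two_mul {M : Type*} [AddCommMonoid M] (g : ℕ) (f : Fin (2 * g) → M) :
    ∑ j, f j = ∑ i : Fin g,
      (f ⟨2 * i.1, by have := i.2; omega⟩ + f ⟨2 * i.1 + 1, by have := i.2; omega⟩) := by
  induction g with
  | zero => simp
  | succ g ih =>
    rw [Fin.sum_univ_castSucc (n := g)]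
    change ∑ j : Fin (2 * g + 1 + 1), f j = _
    rw [Fin.sum_univ_castSucc, Fin.sum_univ_castSucc, add_assoc]
    congr 1
    exact ih fun j => f j.castSucc.castSucc

/-- Let `L` be a Lie algebra over a field `k` and `w₁, …, w_{2g}` (here `w 0, …, w (2g-1)`)
elements whose images span `L/⁅L,L⁆`, i.e. `L` is the sum of the span of the `wᵢ` and the
derived ideal `⁅L,L⁆ = Fil²L`.  If `z ∈ L` satisfies
`z − ∑ᵢ ⁅w_{2i−1}, w_{2i}⁆ ∈ Fil³L`, then for every `q ≥ 2` there are `w'ᵢ` with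
`w'ᵢ − wᵢ ∈ Fil²L` and `z − ∑ᵢ ⁅w'_{2i−1}, w'_{2i}⁆ ∈ Fil^{q+1}L`.
Here `Fil^{n+1}L = LieModule.lowerCentralSeries k L L n` is the lower central series. -/
theorem stmt_4 (k : Type*) [Field k] (L : Type*) [LieRing L] [LieAlgebra k L]
    (g : ℕ) (hg : 1 ≤ g) (w : Fin (2 * g) → L)
    (hspan : Submodule.span k (Set.range w) ⊔
        (LieModule.lowerCentralSeries k L L 1).toSubmodule = ⊤)
    (z : L) (hz : z - symplecticSum g w ∈ LieModule.lowerCentralSeries k L L 2) :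
    ∀ q : ℕ, 2 ≤ q → ∃ w' : Fin (2 * g) → L,
      (∀ i, w' i - w i ∈ LieModule.lowerCentralSeries k L L 1) ∧
      z - symplecticSum g w' ∈ LieModule.lowerCentralSeries k L L q := by
  intro q hq
  induction q, hq using Nat.le_induction with
  | base => exact ⟨w, fun i => by simp, hz⟩
  | succ q hq ih =>
    obtain ⟨w', hw', hd⟩ := ih
    obtain ⟨n, rfl⟩ : ∃ n, q = n + 1 := ⟨q - 1, by omega⟩
    obtain ⟨u, hu, hr⟩ := exists_lie_sum_approx w hspan n hd
    have hu1 : ∀ j, u j ∈ LieModule.lowerCentralSeries k L L 1 := fun j =>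
      LieModule.antitone_lowerCentralSeries k L L (by omega : 1 ≤ n) (hu j)
    refine ⟨fun j => if h : j.1 % 2 = 0 then w' j - u ⟨j.1 + 1, by have := j.2; omega⟩
      else w' j + u ⟨j.1 - 1, by have := j.2; omega⟩, fun j => ?_, ?_⟩
    · dsimp only
      split_ifs
      · rw [sub_right_comm]
        exact sub_mem (hw' j) (hu1 _)
      · rw [add_sub_right_comm]
        exact add_mem (hw' j) (hu1 _)
    · -- The new error is the remainder `hr`, minus the cost of exchanging `w'` for `w`,
      -- plus the quadratic terms in `u`.
      have key := add_mem (sub_mem hr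
        (sum_mem fun j (_ : j ∈ Finset.univ) => lie_mem_lcs_add_two n (hw' j) (hu j)))
        (sum_mem fun (i : Fin g) (_ : i ∈ Finset.univ) => lie_mem_lcs_add_two n
          (hu1 ⟨2 * i.1 + 1, by have := i.2; omega⟩) (hu ⟨2 * i.1, by have := i.2; omega⟩))
      convert key using 1
      have h2 : ∀ i : ℕ, (2 * i + 1) % 2 ≠ 0 := fun i => by omega
      simp only [sum_fin_two_mul, symplecticSum, Nat.mul_mod_right, h2, dite_true, dite_false,
        Nat.add_sub_cancel]
      rw [sub_sub, sub_sub, sub_add, ← Finset.sum_add_distrib, ← Finset.sum_add_distrib,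
        ← Finset.sum_sub_distrib, sub_right_inj]
      refine Finset.sum_congr rfl fun i _ => ?_
      simp only [sub_lie, lie_add]
      rw [← lie_skew (w' ⟨2 * i.1 + 1, _⟩)]
      abel
end

section
/- Let k be a field of characteristic zero, X a type, L = FreeLieAlgebra k X the free Lie algebra over k on X, and q ≥ 1 an integer. Let φ : L × L → k be a k-bilinear alternating form such that φ(x, y) = 0 whenever x ∈ Fil^{q+1}L, and such that φ(⁅x,y⁆, z) + φ(⁅y,z⁆, x) + φ(⁅z,x⁆, y) = 0 for all x, y, z ∈ L. Then there exists a k-linear functional ψ : L → k which vanishes on Fil^{q+2}L and satisfies φ(x, y) = ψ(⁅x,y⁆) for all x, y ∈ L. -/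
/-!
A 2-cocycle `c` on a Lie algebra `L` with trivial coefficients `M` defines a central extension
`E = L × M` of `L`, with bracket `⁅(x, a), (y, b)⁆ = (⁅x, y⁆, c x y)`. When `L` is free, `E → L`
has a Lie algebra section `s`, obtained by lifting the generators. The second component `ψ` of `s`
is linear, and comparing the second components of `s ⁅x, y⁆ = ⁅s x, s y⁆` gives `ψ ⁅x, y⁆ = c x y`
(`FreeLieAlgebra.exists_eq_lie_of_twoCocycle`).

In the theorem, `ψ` then vanishes on `Fil^{q+2}L` automatically: this ideal is spanned by the
brackets `⁅x, y⁆` with `y ∈ Fil^{q+1}L`, where `ψ ⁅x, y⁆ = φ x y = -φ y x = 0`.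
-/

open LieModule.Cohomology in
/-- `H²` of a free Lie algebra with trivial coefficients vanishes. -/
theorem FreeLieAlgebra.exists_eq_lie_of_twoCocycle {R X M : Type*} [CommRing R] [AddCommGroup M]
    [Module R M] [LieRingModule (FreeLieAlgebra R X) M] [LieModule R (FreeLieAlgebra R X) M]
    [LieModule.IsTrivial (FreeLieAlgebra R X) M] (c : twoCocycle R (FreeLieAlgebra R X) M) :
    ∃ ψ : FreeLieAlgebra R X →ₗ[R] M, ∀ x y, c.1 x y = ψ ⁅x, y⁆ := by
  let proj : LieAlgebra.ofTwoCocycle c →ₗ⁅R⁆ FreeLieAlgebra R X :=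
    { toFun := fun e => e.carrier.1
      map_add' := fun _ _ => rfl
      map_smul' := fun _ _ => rfl
      map_lie' := rfl }
  let snd : LieAlgebra.ofTwoCocycle c →ₗ[R] M :=
    { toFun := fun e => e.carrier.2
      map_add' := fun _ _ => rfl
      map_smul' := fun _ _ => rfl }
  let s : FreeLieAlgebra R X →ₗ⁅R⁆ LieAlgebra.ofTwoCocycle c :=
    FreeLieAlgebra.lift R fun x => LieAlgebra.ofProd c (FreeLieAlgebra.of R x, 0)
  have hs : proj.comp s = LieHom.id := by
    ext x
    simp only [LieHom.comp_apply, s, FreeLieAlgebra.lift_of_apply]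
    rfl
  have hs' (x : FreeLieAlgebra R X) : (s x).carrier.1 = x := LieHom.congr_fun hs x
  refine ⟨snd ∘ₗ (s : FreeLieAlgebra R X →ₗ[R] LieAlgebra.ofTwoCocycle c), fun x y => ?_⟩
  have hsnd : snd ⁅s x, s y⁆ = c.1 (s x).carrier.1 (s y).carrier.1
      + ⁅(s x).carrier.1, (s y).carrier.2⁆ - ⁅(s y).carrier.1, (s x).carrier.2⁆ := rfl
  rw [LinearMap.comp_apply, LieHom.coe_toLinearMap, LieHom.map_lie, hsnd, hs', hs',
    LieModule.IsTrivial.trivial, LieModule.IsTrivial.trivial, add_zero, sub_zero]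

/-- Let `k` be a field of characteristic zero, `L = FreeLieAlgebra k X` and `q ≥ 1`.
Any `k`-bilinear alternating form `φ : L × L → k` which vanishes whenever its first
argument lies in `Fil^{q+1}L` and which satisfies the 2-cocycle identity
`φ(⁅x,y⁆,z) + φ(⁅y,z⁆,x) + φ(⁅z,x⁆,y) = 0` is of the form `φ(x,y) = ψ(⁅x,y⁆)` for some
linear functional `ψ : L → k` vanishing on `Fil^{q+2}L`.
Here `Fil^{n+1}L = LieModule.lowerCentralSeries k L L n` is the lower central series. -/
theorem stmt_7 (k : Type*) [Field k] [CharZero k] (X : Type*) (q : ℕ) (hq : 1 ≤ q)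
    (φ : FreeLieAlgebra k X →ₗ[k] FreeLieAlgebra k X →ₗ[k] k)
    (halt : ∀ x : FreeLieAlgebra k X, φ x x = 0)
    (hfil : ∀ x ∈ LieModule.lowerCentralSeries k (FreeLieAlgebra k X) (FreeLieAlgebra k X) q,
      ∀ y : FreeLieAlgebra k X, φ x y = 0)
    (hcocycle : ∀ x y z : FreeLieAlgebra k X, φ ⁅x, y⁆ z + φ ⁅y, z⁆ x + φ ⁅z, x⁆ y = 0) :
    ∃ ψ : FreeLieAlgebra k X →ₗ[k] k,
      (∀ x ∈ LieModule.lowerCentralSeries k (FreeLieAlgebra k X) (FreeLieAlgebra k X) (q + 1),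
        ψ x = 0) ∧
      ∀ x y : FreeLieAlgebra k X, φ x y = ψ ⁅x, y⁆ := by
  have hskew (x y : FreeLieAlgebra k X) : φ x y = -φ y x := by
    have h := halt (x + y)
    simp only [map_add, LinearMap.add_apply, halt, zero_add, add_zero] at h
    linear_combination h
  let e := TrivialLieModule.equiv k (FreeLieAlgebra k X) k
  let c₀ : LieModule.Cohomology.twoCochain k (FreeLieAlgebra k X)
      (TrivialLieModule k (FreeLieAlgebra k X) k) :=
    ⟨φ.compr₂ e.symm.toLinearMap, fun x => by simp [halt]⟩
  have hc₀ (x y : FreeLieAlgebra k X) : c₀ x y = e.symm (φ x y) := rfl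
  have hc : c₀ ∈ LieModule.Cohomology.twoCocycle k (FreeLieAlgebra k X)
      (TrivialLieModule k (FreeLieAlgebra k X) k) := by
    rw [LieModule.Cohomology.mem_twoCocycle_iff_of_trivial]
    intro x y z
    rw [hc₀, hc₀, hc₀, ← map_add]
    congr 1
    have h := hcocycle x y z
    rw [hskew ⁅y, z⁆ x, hskew ⁅z, x⁆ y, ← lie_skew z x, map_neg] at h
    linear_combination -h
  obtain ⟨ψ, hψ⟩ := FreeLieAlgebra.exists_eq_lie_of_twoCocycle ⟨c₀, hc⟩
  have hφ (x y : FreeLieAlgebra k X) : φ x y = (e.toLinearMap ∘ₗ ψ) ⁅x, y⁆ :=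
    congrArg e (hψ x y)
  refine ⟨e.toLinearMap ∘ₗ ψ, fun x hx => ?_, hφ⟩
  rw [LieModule.lowerCentralSeries_succ, ← LieSubmodule.mem_toSubmodule,
    LieSubmodule.lieIdeal_oper_eq_linear_span'] at hx
  refine (Submodule.span_le (p := LinearMap.ker (e.toLinearMap ∘ₗ ψ))).mpr ?_ hx
  rintro _ ⟨y, -, z, hz, rfl⟩
  rw [SetLike.mem_coe, LinearMap.mem_ker, ← hφ, hskew, hfil z hz, neg_zero]
end

section
/- Let K be a field, Γ₀ a linearly ordered commutative group with zero, v : K → Γ₀ a valuation, and σ an automorphism of the field K such that v(σ(a)) = v(a) for all a ∈ K. Let c ∈ K be an element with v(c) ≠ 1. Let V be a finite-dimensional K-vector space, F : V → V a σ-semilinear additive bijection (F(a • x) = σ(a) • F(x) for all a ∈ K, x ∈ V), and N : V → V a K-linear endomorphism satisfying N(F(x)) = c • F(N(x)) for all x ∈ V. Then N is nilpotent. -/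
/-!
Let `p` be the minimal polynomial of `N`, of degree `d`, and let
`q = ∑ σ(pᵢ) c ^ (d - i) Xⁱ`. The commutation relation gives `q(N) ∘ F = c ^ d • F ∘ p(N) = 0`,
so `q(N) = 0` by surjectivity of `F`. As `q` is monic of degree `d`, it equals `p`, that is,
`pᵢ = σ(pᵢ) c ^ (d - i)` for all `i`. Taking valuations, `pᵢ ≠ 0` with `i < d` would force
`v c ^ (d - i) = 1`, hence `v c = 1` since the value group is linearly ordered. So `p = X ^ d`
and `N ^ d = 0`. The case `c = 0` needs no separate treatment.
-/

/-- Let `v : K → Γ₀` be a valuation on a field `K`, `σ` a field automorphism of `K`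
preserving `v`, and `c ∈ K` with `v c ≠ 1`.  If `V` is a finite-dimensional `K`-vector
space, `F : V → V` is a `σ`-semilinear additive bijection, and `N : V →ₗ[K] V` satisfies
`N ∘ F = c • (F ∘ N)`, then `N` is nilpotent. -/
theorem stmt_9 (K : Type*) [Field K] (Γ₀ : Type*) [LinearOrderedCommGroupWithZero Γ₀]
    (v : Valuation K Γ₀) (σ : K ≃+* K) (hσ : ∀ a : K, v (σ a) = v a)
    (c : K) (hc : v c ≠ 1)
    (V : Type*) [AddCommGroup V] [Module K V] [FiniteDimensional K V]
    (F : V → V)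
    (hFadd : ∀ x y : V, F (x + y) = F x + F y)
    (hFsmul : ∀ (a : K) (x : V), F (a • x) = σ a • F x)
    (hFbij : Function.Bijective F)
    (N : V →ₗ[K] V) (hNF : ∀ x : V, N (F x) = c • F (N x)) :
    IsNilpotent N := by
  set p := minpoly K N with hp
  have hint : IsIntegral K N := Algebra.IsIntegral.isIntegral N
  have hpm : p.Monic := minpoly.monic hint
  have hpmap : (p.map (σ : K →+* K)).natDegree = p.natDegree := hpm.natDegree_map _
  set q := (p.map (σ : K →+* K)).scaleRoots c with hq
  have hqm : q.Monic := (Polynomial.monic_scaleRoots_iff c).2 (hpm.map _)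
  have hqdeg : q.natDegree = p.natDegree := by
    rw [hq, Polynomial.natDegree_scaleRoots, hpmap]
  let F' : V →+ V := AddMonoidHom.mk' F hFadd
  have hpow : ∀ (i : ℕ) (x : V), (N ^ i) (F x) = c ^ i • F ((N ^ i) x) := by
    intro i
    induction i with
    | zero => intro x; simp
    | succ i ih =>
      intro x
      rw [pow_succ, Module.End.mul_apply, hNF, map_smul, ih, Module.End.mul_apply, smul_smul,
        pow_succ']
  have hqF : ∀ x : V,
      Polynomial.aeval N q (F x) = c ^ p.natDegree • F (Polynomial.aeval N p x) := by
    intro x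
    rw [Polynomial.aeval_eq_sum_range, Polynomial.aeval_eq_sum_range, hqdeg,
      LinearMap.sum_apply, LinearMap.sum_apply]
    change _ = c ^ p.natDegree • F' _
    rw [map_sum, Finset.smul_sum]
    refine Finset.sum_congr rfl fun i hi => ?_
    have hi' : i ≤ p.natDegree := Nat.lt_succ_iff.1 (Finset.mem_range.1 hi)
    change _ = c ^ p.natDegree • F _
    rw [LinearMap.smul_apply, LinearMap.smul_apply, hpow, hFsmul, smul_smul, smul_smul, hq,
      Polynomial.coeff_scaleRoots, hpmap, Polynomial.coeff_map, mul_assoc, ← pow_add,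
      Nat.sub_add_cancel hi', mul_comm]
    rfl
  have hqN : Polynomial.aeval N q = 0 := by
    ext y
    obtain ⟨x, rfl⟩ := hFbij.surjective y
    rw [hqF, hp, minpoly.aeval, LinearMap.zero_apply, LinearMap.zero_apply]
    change _ • F' 0 = 0
    rw [map_zero, smul_zero]
  have hqp : q = p :=
    (Polynomial.eq_of_monic_of_dvd_of_natDegree_le hpm hqm (minpoly.dvd K N hqN) hqdeg.le)
  have hcoeff : ∀ i < p.natDegree, p.coeff i = 0 := by
    intro i hi
    have h : v (p.coeff i) = v (p.coeff i) * v c ^ (p.natDegree - i) := by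
      conv_lhs => rw [← hqp, hq, Polynomial.coeff_scaleRoots, hpmap, Polynomial.coeff_map]
      rw [map_mul, map_pow]
      congr 1
      exact hσ _
    by_contra h0
    have hv : v c ^ (p.natDegree - i) = 1 :=
      (mul_eq_left₀ ((Valuation.ne_zero_iff v).2 h0)).1 h.symm
    exact hc ((pow_eq_one_iff.1 hv).resolve_right (Nat.sub_ne_zero_of_lt hi))
  have hpX : p = Polynomial.X ^ p.natDegree := by
    ext i
    rw [Polynomial.coeff_X_pow]
    split_ifs with hi
    · rw [hi]; exact hpm.coeff_natDegree
    · rcases lt_or_gt_of_ne hi with h | h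
      · exact hcoeff i h
      · exact Polynomial.coeff_eq_zero_of_natDegree_lt h
  refine ⟨p.natDegree, ?_⟩
  have := minpoly.aeval K N
  rwa [← hp, hpX, map_pow, Polynomial.aeval_X] at this
end
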